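/- For the Gauss–Laguerre–Radau differentiation matrix with nodes x_0 = 0 and x_1,...,x_N the zeros of d/dx L_{N+1}^β, the diagonal entry at the left endpoint is d_{00} = −βN/2. -/

import Mathlib

open Polynomial

/-!
The Rodrigues formula and the Leibniz rule give `L_n^β(t) = ∑ₖ (n choose k) (-βt)^k / k!`, so with
`n = N + 1` the derivative `Q` of `L_n^β` is a polynomial of degree at most `N` vanishing at the
nodes `x_1, …, x_N`. The same holds for the Lagrange basis polynomial `h_0`, which equals `1` at
`x_0 = 0`; hence `Q = Q(0) h_0`. Therefore `d₀₀ = h_0'(0) = Q'(0) / Q(0)`, where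
`Q(0) = -(N + 1)β` and `Q'(0) = (N + 1)Nβ² / 2` are read off the coefficients.
-/

/-- Modified Laguerre polynomial `L_l^β(t) = (1/l!) e^{βt} dⁿ/dtⁿ (tˡ e^{−βt})`. -/
noncomputable def modLaguerre (β : ℝ) (l : ℕ) (t : ℝ) : ℝ :=
  (1 / (l.factorial : ℝ)) * Real.exp (β * t) *
    iteratedDeriv l (fun s => s ^ l * Real.exp (-β * s)) t

/-- The explicit polynomial form `∑ₖ (n choose k) (-β)^k / k! X^k` of `L_n^β`. -/
noncomputable def laguerrePoly (β : ℝ) (n : ℕ) : ℝ[X] :=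
  ∑ k ∈ Finset.range (n + 1), C ((n.choose k : ℝ) * (-β) ^ k / (k.factorial : ℝ)) * X ^ k

lemma coeff_laguerrePoly (β : ℝ) (n k : ℕ) :
    (laguerrePoly β n).coeff k = (n.choose k : ℝ) * (-β) ^ k / (k.factorial : ℝ) := by
  simp only [laguerrePoly, finsetSum_coeff, coeff_C_mul_X_pow]
  rw [Finset.sum_ite_eq]
  split_ifs with h
  · rfl
  · rw [Nat.choose_eq_zero_of_lt (by simpa using h)]; simp

lemma modLaguerre_eq_eval (β : ℝ) (n : ℕ) (t : ℝ) :
    modLaguerre β n t = (laguerrePoly β n).eval t := by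
  have h1 : ContDiffAt ℝ n (fun s : ℝ => s ^ n) t := by fun_prop
  have h2 : ContDiffAt ℝ n (fun s : ℝ => Real.exp (-β * s)) t := by fun_prop
  rw [modLaguerre, iteratedDeriv_fun_mul h1 h2, laguerrePoly, eval_finsetSum,
    ← Finset.sum_range_reflect, Finset.mul_sum]
  refine Finset.sum_congr rfl fun k hk => ?_
  have hk : k ≤ n := by simpa [Nat.lt_succ_iff] using hk
  have hi : n + 1 - 1 - k = n - k := by omega
  have hd : ((n.descFactorial (n - k) : ℕ) : ℝ) = n.factorial / k.factorial := by
    rw [eq_div_iff (by positivity), mul_comm]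
    have := Nat.factorial_mul_descFactorial (Nat.sub_le n k)
    rw [Nat.sub_sub_self hk] at this
    exact_mod_cast this
  have he : Real.exp (β * t) * Real.exp (-β * t) = 1 := by
    rw [← Real.exp_add]; simp
  have hf : (n.factorial : ℝ) ≠ 0 := by positivity
  rw [hi, Nat.sub_sub_self hk, Nat.choose_symm hk, iteratedDeriv_exp_const_mul]
  simp only [iteratedDeriv_pow, hd, Nat.sub_sub_self hk, eval_mul, eval_C,
    eval_pow, eval_X]
  calc _ = (n.choose k : ℝ) * (-β) ^ k / k.factorial * t ^ k *
        (Real.exp (β * t) * Real.exp (-β * t)) := by field_simp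
    _ = _ := by rw [he, mul_one]

/-- For the Gauss–Laguerre–Radau differentiation matrix, the entry at the left
endpoint is `d₀₀ = −βN/2`. -/
theorem GLR_diff_matrix_corner (β : ℝ) (hβ : 0 < β) (N : ℕ)
    (x : Fin (N + 1) → ℝ) (hx : Function.Injective x) (hx0 : x 0 = 0)
    (hzero : ∀ j : Fin (N + 1), j ≠ 0 → deriv (modLaguerre β (N + 1)) (x j) = 0) :
    (Polynomial.derivative (Lagrange.basis Finset.univ x 0)).eval (x 0) =
      -(β * N) / 2 := by
  set Q := derivative (laguerrePoly β (N + 1)) with hQ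
  have hfun : modLaguerre β (N + 1) = fun t => (laguerrePoly β (N + 1)).eval t :=
    funext (modLaguerre_eq_eval β (N + 1))
  have hinj : Set.InjOn x (Finset.univ : Finset (Fin (N + 1))) := hx.injOn
  have hQ0 : Q.eval 0 = -(N + 1) * β := by
    rw [← coeff_zero_eq_eval_zero, hQ, coeff_derivative, coeff_laguerrePoly]
    simp
    ring
  have hQ1 : (derivative Q).eval 0 = (N + 1) * N / 2 * β ^ 2 := by
    rw [← coeff_zero_eq_eval_zero, coeff_derivative, hQ, coeff_derivative, coeff_laguerrePoly]
    rw [Nat.cast_choose_two]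
    norm_num [Nat.factorial]
  have hQdeg : Q.degree < (Finset.univ : Finset (Fin (N + 1))).card := by
    rw [Finset.card_univ, Fintype.card_fin, degree_lt_iff_coeff_zero]
    intro m hm
    rw [hQ, coeff_derivative, coeff_laguerrePoly, Nat.choose_eq_zero_of_lt (by omega)]
    simp
  have hbdeg : (C (Q.eval 0) * Lagrange.basis Finset.univ x 0).degree
      < (Finset.univ : Finset (Fin (N + 1))).card := by
    rw [C_mul']
    refine (degree_smul_le _ _).trans_lt ?_
    rw [Lagrange.degree_basis hinj (Finset.mem_univ 0), Finset.card_univ, Fintype.card_fin]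
    exact_mod_cast Nat.lt_succ_self N
  have key : Q = C (Q.eval 0) * Lagrange.basis Finset.univ x 0 := by
    refine eq_of_degrees_lt_of_eval_index_eq _ hinj hQdeg hbdeg fun j _ => ?_
    rw [eval_mul, eval_C]
    by_cases hj : j = 0
    · rw [hj, Lagrange.eval_basis_self hinj (Finset.mem_univ 0), hx0, mul_one]
    · rw [Lagrange.eval_basis_of_ne (Ne.symm hj) (Finset.mem_univ j), mul_zero]
      have := hzero j hj
      rwa [hfun, Polynomial.deriv] at this
  have h := congrArg (fun p => (derivative p).eval 0) key
  simp only [derivative_C_mul, eval_mul, eval_C] at h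
  rw [hQ1, hQ0] at h
  rw [hx0]
  have hne : -((N : ℝ) + 1) * β ≠ 0 := mul_ne_zero (by linarith [Nat.cast_nonneg (α := ℝ) N]) hβ.ne'
  apply mul_left_cancel₀ hne
  rw [← h]
  ring
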